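/- Let d ≥ 3 be odd, n = (d²+1)/2, and in R = 𝔽₂[x]/(xⁿ−1) set a = 1+x, b = (1+x)·P_d(x), u(x) = 1 + x^d + ⋯ + x^{d·((d−1)/2 − 1)}, and v(x) = x^{n−(d+1)/2} + ⋯ + x^{n−1}. Then (1, P_d(x)) + (u, v) + (x·v(x^d), u(x^d)) ∈ C₂(a,b) (so (1, P_d) represents the logical class IX = XI·XX), and every element of the coset (1, P_d(x)) + C₂(a,b) has weight at least d+1; hence the minimum weight in this coset equals d+1, attained by (1, P_d(x)). -/

import Mathlib

open Polynomial

noncomputable section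

/-- `R2 n` is the ring `𝔽₂[x]/(xⁿ − 1)`. -/
abbrev R2 (n : ℕ) : Type := AdjoinRoot (X ^ n - 1 : (ZMod 2)[X])

/-- The image of `x` in `𝔽₂[x]/(xⁿ − 1)`. -/
def xR (n : ℕ) : R2 n := AdjoinRoot.root _

/-- The quotient map `𝔽₂[x] → 𝔽₂[x]/(xⁿ − 1)`. -/
def mkR (n : ℕ) : (ZMod 2)[X] →+* R2 n := AdjoinRoot.mk _

lemma xR_pow_n (n : ℕ) : xR n ^ n = 1 := by
  have h : (AdjoinRoot.mk (X ^ n - 1 : (ZMod 2)[X])) (X ^ n - 1) = 0 := AdjoinRoot.mk_self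
  rw [map_sub, map_pow, AdjoinRoot.mk_X, map_one, sub_eq_zero] at h
  exact h

/-- The unique representative of degree `< n` of an element of `𝔽₂[x]/(xⁿ − 1)` (junk if `n = 0`). -/
def repP {n : ℕ} (u : R2 n) : (ZMod 2)[X] :=
  if h : n = 0 then 0
  else AdjoinRoot.modByMonicHom (by simpa using monic_X_pow_sub_C (1 : ZMod 2) h) u

/-- The Hamming weight of an element of `𝔽₂[x]/(xⁿ − 1)`: the number of nonzero coefficients
of its degree-`< n` representative. -/
def wt {n : ℕ} (u : R2 n) : ℕ := (repP u).support.card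

/-- Coefficient of the degree-`< n` representative, indexed by `ℤ/n`. -/
def coeffZ {n : ℕ} (u : R2 n) (i : ZMod n) : ZMod 2 := (repP u).coeff i.val

/-- The X-stabilizer space `C₂(a,b) = {(r·a, r·b) : r ∈ R}` of the GB code of `(a,b)`. -/
def C2set (n : ℕ) (a b : R2 n) : Set (R2 n × R2 n) := {p | ∃ r : R2 n, p = (r * a, r * b)}

/-- The space `C₁(a,b) = {(u,v) : u·b + v·a = 0}` of the GB code of `(a,b)`. -/
def C1set (n : ℕ) (a b : R2 n) : Set (R2 n × R2 n) := {p | p.1 * b + p.2 * a = 0}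

/-- The (X-side) minimum distance of the GB code of `(a,b)`. -/
def dGB (n : ℕ) (a b : R2 n) : ℕ :=
  sInf {k | ∃ p ∈ C1set n a b \ C2set n a b, wt p.1 + wt p.2 = k}

/-- `P_m(x) = 1 + x + ⋯ + x^{m−1}` as a polynomial over `𝔽₂`. -/
def PmP (m : ℕ) : (ZMod 2)[X] := ∑ i ∈ Finset.range m, X ^ i

/-- `P_m(x) = 1 + x + ⋯ + x^{m−1}` as an element of `𝔽₂[x]/(xⁿ − 1)`. -/
def PmR (n m : ℕ) : R2 n := ∑ i ∈ Finset.range m, xR n ^ i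

/-- The ring endomorphism of `𝔽₂[x]/(xⁿ − 1)` induced by `x ↦ x^d`. -/
def substHom (n d : ℕ) : R2 n →+* R2 n :=
  AdjoinRoot.lift (algebraMap (ZMod 2) (R2 n)) (xR n ^ d) (by
    simp only [eval₂_sub, eval₂_X_pow, eval₂_one]
    rw [← pow_mul, mul_comm d n, pow_mul, xR_pow_n, one_pow, sub_self])

/-- The Euclidean inner product on `𝔽₂²ⁿ`, in terms of pairs `(u₁, u₂)` of elements of
`𝔽₂[x]/(xⁿ − 1)` (representing the concatenated binary vector `(u₁ | u₂)`). -/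
def eucInner (n : ℕ) (p q : R2 n × R2 n) : ZMod 2 :=
  ∑ i ∈ Finset.range n,
    ((repP p.1).coeff i * (repP q.1).coeff i + (repP p.2).coeff i * (repP q.2).coeff i)

/-- The symplectic inner product of `u₁ + w·u₂` and `v₁ + w·v₂`, i.e.
`Σᵢ (u₁ᵢ·v₂ᵢ + u₂ᵢ·v₁ᵢ)`, in terms of the pairs `(u₁,u₂)`, `(v₁,v₂)`. -/
def sympInner (n : ℕ) (p q : R2 n × R2 n) : ZMod 2 :=
  ∑ i ∈ Finset.range n,
    ((repP p.1).coeff i * (repP q.2).coeff i + (repP p.2).coeff i * (repP q.1).coeff i)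

/-- Euclidean dual of a set of (pairs representing) binary vectors of length `2n`. -/
def eucDual (n : ℕ) (S : Set (R2 n × R2 n)) : Set (R2 n × R2 n) :=
  {p | ∀ q ∈ S, eucInner n q p = 0}

/-- Symplectic dual of a set of (pairs representing) vectors of `𝔽₄ⁿ`. -/
def sympDual (n : ℕ) (S : Set (R2 n × R2 n)) : Set (R2 n × R2 n) :=
  {p | ∀ q ∈ S, sympInner n q p = 0}

/-- Number of nonzero `𝔽₄`-coordinates of `u₁ + w·u₂`, in terms of the pair `(u₁,u₂)`. -/
def wt4 (n : ℕ) (p : R2 n × R2 n) : ℕ := ((repP p.1).support ∪ (repP p.2).support).card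

/-- The `2n` binary coordinates of a pair `(u₁,u₂)`. -/
def coords {n : ℕ} (p : R2 n × R2 n) : (Fin n ⊕ Fin n) → ZMod 2 :=
  Sum.elim (fun i => (repP p.1).coeff i) (fun i => (repP p.2).coeff i)

/-- Vertex set of the Tanner graph: check vertices `x_t` (left) and data vertices
`q_s`, `q'_s` (right). -/
def TV (n : ℕ) : Type := (ZMod n) ⊕ ((ZMod n) ⊕ (ZMod n))

/-- `trel a b v w` holds iff `v` is a check vertex `x_t`, `w` is a data vertex, and they are
connected: `x_t ~ q_s` iff `a_{s−t} = 1`, and `x_t ~ q'_s` iff `b_{s−t} = 1`. -/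
def trel {n : ℕ} (a b : R2 n) (v w : TV n) : Prop :=
  ∃ t s : ZMod n, v = Sum.inl t ∧
    ((w = Sum.inr (Sum.inl s) ∧ coeffZ a (s - t) = 1) ∨
     (w = Sum.inr (Sum.inr s) ∧ coeffZ b (s - t) = 1))

/-- The Tanner graph `T(a,b)` of the GB code of `(a,b)`. -/
def tanner (n : ℕ) (a b : R2 n) : SimpleGraph (TV n) where
  Adj v w := trel a b v w ∨ trel a b w v
  symm := ⟨fun v w h => Or.symm h⟩
  loopless := by
    constructor
    rintro v (⟨t, s, hv, hw⟩ | ⟨t, s, hv, hw⟩) <;>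
      rcases hw with ⟨hw, -⟩ | ⟨hw, -⟩ <;> (subst hv; simp at hw)

end

/-!
Write `P = P_d` and let `J = P_n` be the all-ones element, which is fixed by multiplication by `x`.
Dividing `J` by `P` gives `v + u P = J`. Since `2n = d² + 1`, the element `P` is a unit, with
`x P(x) P(x^d) = 1`; so applying `x ↦ x^d` and multiplying by `x P` yields the second identity
`u(x^d) + x v(x^d) P = J`. The sum of the two gives membership in `C₂(a,b)`.

An element of the coset is `(w, w P)` with `w J = J`, so `v w + u (w P) = J` and
`u(x^d) w + x v(x^d) (w P) = J`. Comparing weights in these and adding,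
`d² + 1 = 2n ≤ d (wt w + wt (w P))`.
-/

lemma geom_sum_pow_mul_geom_sum {S : Type*} [Semiring S] (x : S) (d k : ℕ) :
    (∑ i ∈ Finset.range k, x ^ (d * i)) * ∑ i ∈ Finset.range d, x ^ i =
      ∑ i ∈ Finset.range (d * k), x ^ i := by
  induction k with
  | zero => simp
  | succ k ih =>
    rw [Finset.sum_range_succ, add_mul, ih, Nat.mul_succ, Finset.sum_range_add, Finset.mul_sum]
    simp only [pow_add]

section Ring

variable {n : ℕ}

instance : Nontrivial (R2 n) :=
  Ideal.Quotient.nontrivial_iff.2 <|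
    mt Ideal.span_singleton_eq_top.1 (not_isUnit_X_pow_sub_one (ZMod 2) n)

instance : CharP (R2 n) 2 :=
  charP_of_injective_algebraMap' (ZMod 2) 2

lemma mkR_X : mkR n X = xR n := AdjoinRoot.mk_X

lemma substHom_mkR (d : ℕ) (p : (ZMod 2)[X]) :
    substHom n d (mkR n p) = p.eval₂ (algebraMap (ZMod 2) (R2 n)) (xR n ^ d) :=
  AdjoinRoot.lift_mk _ p

lemma substHom_xR (d : ℕ) : substHom n d (xR n) = xR n ^ d := by
  rw [← mkR_X, substHom_mkR, eval₂_X, mkR_X]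

lemma substHom_substHom (d e : ℕ) (f : R2 n) :
    substHom n d (substHom n e f) = substHom n (d * e) f := by
  obtain ⟨p, rfl⟩ : ∃ p, mkR n p = f := AdjoinRoot.mk_surjective f
  rw [substHom_mkR, substHom_mkR, hom_eval₂, map_pow, substHom_xR, pow_mul,
    Subsingleton.elim ((substHom n d).comp _)]

end Ring

section Weight

variable {n : ℕ}

lemma monic_X_pow_sub_one {S : Type*} [Ring S] (hn : n ≠ 0) : (X ^ n - 1 : S[X]).Monic := by
  simpa using monic_X_pow_sub_C (1 : S) hn

lemma mkR_repP (hn : n ≠ 0) (f : R2 n) : mkR n (repP f) = f := by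
  rw [repP, dif_neg hn]
  exact AdjoinRoot.mk_leftInverse (monic_X_pow_sub_one hn) f

lemma repP_mkR (hn : n ≠ 0) (p : (ZMod 2)[X]) : repP (mkR n p) = p %ₘ (X ^ n - 1) := by
  rw [repP, dif_neg hn]
  exact AdjoinRoot.modByMonicHom_mk _ p

lemma repP_add (f g : R2 n) : repP (f + g) = repP f + repP g := by
  by_cases hn : n = 0 <;> simp [repP, hn]

lemma wt_zero : wt (0 : R2 n) = 0 := by
  by_cases hn : n = 0 <;> simp [wt, repP, hn]

lemma wt_add_le (f g : R2 n) : wt (f + g) ≤ wt f + wt g := by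
  classical
  rw [wt, repP_add]
  exact (Finset.card_le_card support_add).trans (Finset.card_union_le _ _)

lemma wt_mkR {p : (ZMod 2)[X]} (hp : p.degree < n) : wt (mkR n p) = p.support.card := by
  rcases eq_or_ne n 0 with rfl | hn
  · have hp0 : p = 0 := by simpa using hp
    simp [hp0, wt_zero]
  · have hdeg : (X ^ n - 1 : (ZMod 2)[X]).degree = n := by
      simpa using degree_X_pow_sub_C (Nat.pos_of_ne_zero hn) (1 : ZMod 2)
    have hmod : p %ₘ (X ^ n - 1) = p :=
      (modByMonic_eq_self_iff (monic_X_pow_sub_one hn)).2 (by rwa [hdeg])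
    rw [wt, repP_mkR hn, hmod]

lemma wt_sum_xR_pow_of_subset {s : Finset ℕ} (hs : s ⊆ Finset.range n) :
    wt (∑ i ∈ s, xR n ^ i) = s.card := by
  have hsupp : (∑ i ∈ s, X ^ i : (ZMod 2)[X]).support = s := by
    ext i
    simp [coeff_X_pow]
  have hdeg : (∑ i ∈ s, X ^ i : (ZMod 2)[X]).degree < n :=
    (degree_lt_iff_coeff_zero _ _).2 fun i hi =>
      notMem_support_iff.1 fun h => (Finset.mem_range.1 (hs (hsupp ▸ h))).not_ge hi
  simpa [mkR_X, hsupp] using wt_mkR hdeg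

lemma wt_PmR {k : ℕ} (hk : k ≤ n) : wt (PmR n k) = k := by
  rw [PmR, wt_sum_xR_pow_of_subset (Finset.range_mono hk), Finset.card_range]

lemma wt_xR_pow_le (k : ℕ) : wt (xR n ^ k) ≤ 1 := by
  rcases eq_or_ne n 0 with rfl | hn
  · simp [wt, repP]
  · rw [pow_eq_pow_mod k (xR_pow_n n)]
    have hk : {k % n} ⊆ Finset.range n := by simpa using Nat.mod_lt k (Nat.pos_of_ne_zero hn)
    simpa using (wt_sum_xR_pow_of_subset hk).le

lemma wt_sum_xR_pow_le {ι : Type*} (s : Finset ι) (e : ι → ℕ) :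
    wt (∑ i ∈ s, xR n ^ e i) ≤ s.card :=
  calc wt (∑ i ∈ s, xR n ^ e i) ≤ ∑ i ∈ s, wt (xR n ^ e i) :=
        Finset.le_sum_of_subadditive wt wt_zero.le wt_add_le s _
    _ ≤ ∑ _i ∈ s, 1 := Finset.sum_le_sum fun i _ => wt_xR_pow_le (e i)
    _ = s.card := (Finset.card_eq_sum_ones s).symm

lemma sum_support_repP (hn : n ≠ 0) (f : R2 n) :
    ∑ i ∈ (repP f).support, xR n ^ i = f := by
  conv_rhs => rw [← mkR_repP hn f, (repP f).as_sum_support, map_sum]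
  refine Finset.sum_congr rfl fun i hi => ?_
  have hcoeff : (repP f).coeff i = 1 := (Fin.eq_one_of_ne_zero _ (mem_support_iff.1 hi) :)
  rw [hcoeff, monomial_one_right_eq_X_pow, map_pow, mkR_X]

lemma wt_mul_le (f g : R2 n) : wt (f * g) ≤ wt f * wt g := by
  rcases eq_or_ne n 0 with rfl | hn
  · simp [wt, repP]
  · have hfg : f * g =
        ∑ ij ∈ (repP f).support ×ˢ (repP g).support, xR n ^ (ij.1 + ij.2) := by
      simp only [pow_add, Finset.sum_product, ← Finset.sum_mul_sum, sum_support_repP hn]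
    rw [hfg]
    exact (wt_sum_xR_pow_le _ _).trans_eq (Finset.card_product _ _)

lemma wt_xR_mul_le (f : R2 n) : wt (xR n * f) ≤ wt f := by
  simpa using (wt_mul_le (xR n ^ 1) f).trans (Nat.mul_le_mul_right _ (wt_xR_pow_le 1))

lemma wt_substHom_le (d : ℕ) (f : R2 n) : wt (substHom n d f) ≤ wt f := by
  rcases eq_or_ne n 0 with rfl | hn
  · simp [wt, repP]
  · have hf : substHom n d f = ∑ i ∈ (repP f).support, xR n ^ (d * i) := by
      conv_lhs => rw [← sum_support_repP hn f]
      simp only [map_sum, map_pow, substHom_xR, pow_mul]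
    rw [hf]
    exact wt_sum_xR_pow_le _ _

end Weight

section PmR

variable {n : ℕ}

lemma substHom_PmR (d k : ℕ) :
    substHom n d (PmR n k) = ∑ i ∈ Finset.range k, xR n ^ (d * i) := by
  simp [PmR, substHom_xR, pow_mul]

lemma substHom_zero_PmR_of_odd {k : ℕ} (hk : Odd k) : substHom n 0 (PmR n k) = 1 := by
  simp [substHom_PmR, CharTwo.natCast_eq_ite, Nat.not_even_iff_odd.2 hk]

lemma substHom_PmR_mul_PmR (d k : ℕ) : substHom n d (PmR n k) * PmR n d = PmR n (d * k) := by
  rw [substHom_PmR]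
  exact geom_sum_pow_mul_geom_sum _ d k

lemma PmR_mul_left (k : ℕ) : PmR n (n * k) = k * PmR n n := by
  rw [← substHom_PmR_mul_PmR, substHom_PmR]
  simp [pow_mul, xR_pow_n]

lemma xR_mul_PmR_add_one (k : ℕ) : xR n * PmR n k + 1 = PmR n (k + 1) :=
  geom_sum_succ.symm

lemma xR_mul_PmR_self : xR n * PmR n n = PmR n n := by
  refine add_right_cancel (b := 1) ?_
  rw [xR_mul_PmR_add_one, PmR, Finset.sum_range_succ, xR_pow_n, PmR]

lemma one_add_xR_mul_PmR_self : (1 + xR n) * PmR n n = 0 := by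
  rw [add_mul, one_mul, xR_mul_PmR_self, CharTwo.add_self_eq_zero]

/-- The product telescopes to `x P_{d²} = P_{2n} - 1`, and `P_{2n} = 2 P_n = 0`. -/
lemma xR_mul_substHom_PmR_mul_PmR {d : ℕ} (hn : 2 * n = d ^ 2 + 1) :
    xR n * (substHom n d (PmR n d) * PmR n d) = 1 := by
  rw [substHom_PmR_mul_PmR, ← CharTwo.add_eq_zero, xR_mul_PmR_add_one, ← sq, ← hn, mul_comm,
    PmR_mul_left, Nat.cast_two, two_mul, CharTwo.add_self_eq_zero]

lemma sum_Ico_add_sum_mul_PmR {d k : ℕ} (hk : d * k ≤ n) :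
    ∑ i ∈ Finset.Ico (d * k) n, xR n ^ i +
      (∑ i ∈ Finset.range k, xR n ^ (d * i)) * PmR n d = PmR n n := by
  rw [← substHom_PmR, substHom_PmR_mul_PmR, add_comm]
  exact Finset.sum_range_add_sum_Ico _ hk

lemma one_add_xR_dvd_iff_substHom_zero_eq_zero {f : R2 n} :
    1 + xR n ∣ f ↔ substHom n 0 f = 0 := by
  constructor
  · rintro ⟨g, rfl⟩
    rw [map_mul, map_add, map_one, substHom_xR, pow_zero, CharTwo.add_self_eq_zero, zero_mul]
  · intro hf
    obtain ⟨p, rfl⟩ : ∃ p, mkR n p = f := AdjoinRoot.mk_surjective f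
    have hconst : mkR n (C (p.eval 1)) = 0 := by
      rw [← hf, substHom_mkR, pow_zero, eval₂_at_one]
      rfl
    have hdvd : mkR n (X - C 1) ∣ mkR n (p - C (p.eval 1)) :=
      map_dvd (mkR n) X_sub_C_dvd_sub_C_eval
    rwa [map_sub, map_sub, hconst, sub_zero, mkR_X, C_1, map_one, CharTwo.sub_eq_add (xR n),
      add_comm] at hdvd

end PmR

section Coset

variable {n : ℕ} {p f g f' g' : R2 n}

lemma le_wt_mul_add_wt_mul_of_mem_C2set (h : f + g * p = PmR n n) {c : R2 n × R2 n}
    (hc : c ∈ C2set n (1 + xR n) ((1 + xR n) * p)) :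
    n ≤ wt f * wt ((1, p) + c).1 + wt g * wt ((1, p) + c).2 := by
  obtain ⟨r, rfl⟩ := hc
  have hones : f * (1 + r * (1 + xR n)) + g * (p + r * ((1 + xR n) * p)) = PmR n n := by
    linear_combination (1 + r * (1 + xR n)) * h + r * one_add_xR_mul_PmR_self (n := n)
  calc n = wt (PmR n n) := (wt_PmR le_rfl).symm
    _ ≤ wt (f * (1 + r * (1 + xR n))) + wt (g * (p + r * ((1 + xR n) * p))) :=
      hones ▸ wt_add_le _ _
    _ ≤ _ := add_le_add (wt_mul_le _ _) (wt_mul_le _ _)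

lemma two_mul_le_mul_wt_of_mem_C2set {D : ℕ} (h : f + g * p = PmR n n)
    (h' : g' + f' * p = PmR n n) (hfg' : wt f + wt g' ≤ D) (hgf' : wt g + wt f' ≤ D)
    {c : R2 n × R2 n} (hc : c ∈ C2set n (1 + xR n) ((1 + xR n) * p)) :
    2 * n ≤ D * (wt ((1, p) + c).1 + wt ((1, p) + c).2) := by
  have hfg := le_wt_mul_add_wt_mul_of_mem_C2set h hc
  have hgf := le_wt_mul_add_wt_mul_of_mem_C2set h' hc
  generalize wt ((1, p) + c).1 = k, wt ((1, p) + c).2 = l at hfg hgf ⊢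
  calc 2 * n ≤ (wt f + wt g') * k + (wt g + wt f') * l := by linarith
    _ ≤ D * k + D * l := by gcongr
    _ = D * (k + l) := (mul_add D k l).symm

lemma add_mem_C2set (h : f + g * p = PmR n n) (h' : g' + f' * p = PmR n n)
    (heval : substHom n 0 (1 + g + f') = 0) :
    (1, p) + (g, f) + (f', g') ∈ C2set n (1 + xR n) ((1 + xR n) * p) := by
  obtain ⟨r, hr⟩ := one_add_xR_dvd_iff_substHom_zero_eq_zero.2 heval
  refine ⟨r, Prod.ext ?_ ?_⟩
  · simp only [Prod.mk_add_mk, hr, mul_comm]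
  · simp only [Prod.mk_add_mk]
    linear_combination p * hr + h + h' - CharTwo.add_self_eq_zero (g * p + f' * p - PmR n n)

end Coset

section SquareLength

variable {n d : ℕ} {f g : R2 n}

lemma substHom_add_xR_mul_substHom_mul_PmR (hd : Odd d) (hn : 2 * n = d ^ 2 + 1)
    (h : f + g * PmR n d = PmR n n) :
    substHom n d g + xR n * substHom n d f * PmR n d = PmR n n := by
  have himage : (substHom n d f + substHom n d g * substHom n d (PmR n d)) * PmR n d =
      PmR n n := by
    rw [← map_mul, ← map_add, h, substHom_PmR_mul_PmR, mul_comm d, PmR_mul_left,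
      CharTwo.natCast_eq_ite, if_neg (Nat.not_even_iff_odd.2 hd), one_mul]
  linear_combination xR n * himage + xR_mul_PmR_self (n := n) -
    substHom n d g * xR_mul_substHom_PmR_mul_PmR hn

/-- Evaluating the hypothesis at `x = 1` gives `f(1) + g(1) = 1`, as both `d` and `n` are odd. -/
lemma add_substHom_mem_C2set (hd : Odd d) (hn : 2 * n = d ^ 2 + 1)
    (h : f + g * PmR n d = PmR n n) :
    (1, PmR n d) + (g, f) + (xR n * substHom n d f, substHom n d g) ∈
      C2set n (1 + xR n) ((1 + xR n) * PmR n d) := by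
  refine add_mem_C2set h (substHom_add_xR_mul_substHom_mul_PmR hd hn h) ?_
  have hn_odd : Odd n := by
    obtain ⟨m, rfl⟩ := hd
    exact ⟨m ^ 2 + m, by linarith⟩
  have heval := congrArg (substHom n 0) h
  simp only [map_add, map_mul, substHom_zero_PmR_of_odd hd, substHom_zero_PmR_of_odd hn_odd,
    mul_one] at heval
  simp only [map_add, map_mul, map_one, substHom_xR, pow_zero, substHom_substHom, zero_mul,
    one_mul]
  rw [add_assoc, add_comm (substHom n 0 g), heval, CharTwo.add_self_eq_zero]

lemma add_one_le_wt_of_mem_C2set (hd : Odd d) (hn : 2 * n = d ^ 2 + 1)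
    (h : f + g * PmR n d = PmR n n) (hwt : wt f + wt g ≤ d) {c : R2 n × R2 n}
    (hc : c ∈ C2set n (1 + xR n) ((1 + xR n) * PmR n d)) :
    d + 1 ≤ wt ((1, PmR n d) + c).1 + wt ((1, PmR n d) + c).2 := by
  have hg : wt (substHom n d g) ≤ wt g := wt_substHom_le d g
  have hf : wt (xR n * substHom n d f) ≤ wt f := (wt_xR_mul_le _).trans (wt_substHom_le d f)
  have hbound := two_mul_le_mul_wt_of_mem_C2set (D := d) h
    (substHom_add_xR_mul_substHom_mul_PmR hd hn h) (by omega) (by omega) hc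
  rw [hn, sq] at hbound
  exact lt_of_mul_lt_mul_left (Nat.lt_of_succ_le hbound) d.zero_le

end SquareLength

noncomputable section

/-- For the `[[d²+1, 2, d]]` GB code (`d ≥ 3` odd, `2n = d²+1`,
`a = 1+x`, `b = (1+x)·P_d(x)`), with `u, v` as in Statement 8:
`(1, P_d) + (u, v) + (x·v(x^d), u(x^d)) ∈ C₂(a,b)` (so `(1, P_d)` represents the logical
class `IX = XI·XX`), every element of the coset `(1, P_d) + C₂(a,b)` has weight at least
`d+1`, and the minimum weight in this coset equals `d+1` (attained by `(1, P_d)`). -/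
theorem stmt_9 (d n : ℕ) (hd : Odd d) (hd3 : 3 ≤ d) (hn : 2 * n = d ^ 2 + 1)
    (a b u v : R2 n) (ha : a = 1 + xR n) (hb : b = (1 + xR n) * PmR n d)
    (hu : u = ∑ i ∈ Finset.range ((d - 1) / 2), xR n ^ (d * i))
    (hv : v = ∑ i ∈ Finset.Ico (n - (d + 1) / 2) n, xR n ^ i) :
    ((1 : R2 n), PmR n d) + (u, v) + (xR n * substHom n d v, substHom n d u) ∈
      C2set n a b ∧
    (∀ c ∈ C2set n a b,
      d + 1 ≤ wt (((1 : R2 n), PmR n d) + c).1 + wt (((1 : R2 n), PmR n d) + c).2) ∧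
    sInf {k | ∃ c ∈ C2set n a b,
      wt (((1 : R2 n), PmR n d) + c).1 + wt (((1 : R2 n), PmR n d) + c).2 = k} = d + 1 := by
  subst ha hb
  have hsplit : n - (d + 1) / 2 = d * ((d - 1) / 2) := by
    obtain ⟨m, rfl⟩ := hd
    rw [show (2 * m + 1 - 1) / 2 = m by omega, show (2 * m + 1 + 1) / 2 = m + 1 by omega]
    exact Nat.sub_eq_of_eq_add (by linarith)
  have huv : v + u * PmR n d = PmR n n := by
    rw [hu, hv, hsplit]
    exact sum_Ico_add_sum_mul_PmR (by omega)
  have hwt : wt v + wt u ≤ d := by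
    have hv_le := wt_sum_xR_pow_le (n := n) (Finset.Ico (n - (d + 1) / 2) n) id
    have hu_le := wt_sum_xR_pow_le (n := n) (Finset.range ((d - 1) / 2)) (d * ·)
    simp only [id, ← hu, ← hv, Nat.card_Ico, Finset.card_range] at hv_le hu_le
    omega
  have hlower := fun c (hc : c ∈ C2set n (1 + xR n) ((1 + xR n) * PmR n d)) =>
    add_one_le_wt_of_mem_C2set hd hn huv hwt hc
  refine ⟨add_substHom_mem_C2set hd hn huv, hlower, IsLeast.csInf_eq ⟨⟨0, ⟨0, ?_⟩, ?_⟩, ?_⟩⟩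
  · simp only [zero_mul, Prod.mk_zero_zero]
  · have hone : wt (1 : R2 n) = 1 := by simpa [PmR] using wt_PmR (n := n) (k := 1) (by nlinarith)
    rw [add_zero, hone, wt_PmR (by nlinarith), add_comm]
  · rintro _ ⟨c, hc, rfl⟩
    exact hlower c hc

end
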